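/- For every n ≥ 1 and every g ∈ SL(2,ℤ), there exists exactly one triple (i,j,k) with 0 ≤ i,j ≤ n−1 and 0 ≤ k ≤ 5 such that g·(A^i B^j α_k)⁻¹ lies in Φ±(n); that is, the matrices A^i B^j α_k form a complete set of right coset representatives of Φ(n) in PSL(2,ℤ). -/

import Mathlib

/-!
The six matrices `alpha k` represent the cosets of `Γ(2)` in `SL(2, ℤ)`, so everything reduces to
showing that `A ^ i * B ^ j` with `0 ≤ i, j < n` represent the cosets of `Φ±(n)` in `Γ(2)`.

* `Γ(2)` is generated by `A`, `B`, `-1` (`exists_mul_alpha`, `gamma2_le_closure`): the union of the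
  six cosets `⟨A, B, -1⟩ α_k` is stable under right multiplication by the generators `S`, `T` of
  `SL(2, ℤ)`.  Since `Φ±(n)` contains the commutator subgroup of `Γ(2)`, every element of `Γ(2)` is
  congruent to some `A ^ i * B ^ j` modulo `Φ±(n)`, and the exponents only matter modulo `n`; this
  yields existence.
* `A` and `B` freely generate a free group, by ping-pong on the first column of a matrix
  (`freeHom_injective`), and this group does not contain `-1` because a free group is torsion-free.
  Hence `Γ(2)` is `{±1}` times a free group, and the exponent sums of `A` and `B` modulo `n`
  are well defined on `Γ(2)` and vanish on `Φ±(n)` (`phiPM_le_signed`); this yields uniqueness.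
-/

open Matrix

/-- `Γ(2)`, the principal congruence subgroup of level 2 in `SL(2, ℤ)`. -/
def Gamma2 : Subgroup (Matrix.SpecialLinearGroup (Fin 2) ℤ) := CongruenceSubgroup.Gamma 2

/-- The matrix `A = [[1,2],[0,1]]` in `SL(2, ℤ)`. -/
def Amat : Matrix.SpecialLinearGroup (Fin 2) ℤ :=
  ⟨!![1, 2; 0, 1], by norm_num [Matrix.det_fin_two_of]⟩

/-- The matrix `B = [[1,0],[2,1]]` in `SL(2, ℤ)`. -/
def Bmat : Matrix.SpecialLinearGroup (Fin 2) ℤ :=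
  ⟨!![1, 0; 2, 1], by norm_num [Matrix.det_fin_two_of]⟩

/-- The Fermat group `Φ(n)`: the subgroup of `SL(2, ℤ)` generated by `A^n`, `B^n` and the
commutator subgroup `Γ(2)'` of `Γ(2)`. -/
def Phi (n : ℕ) : Subgroup (Matrix.SpecialLinearGroup (Fin 2) ℤ) :=
  Subgroup.closure {Amat ^ n, Bmat ^ n} ⊔ ⁅Gamma2, Gamma2⁆

/-- `Φ±(n)`: the subgroup of `SL(2, ℤ)` generated by `A^n`, `B^n`, `-I` and the commutator
subgroup of `Γ(2)`; the preimage in `SL(2, ℤ)` of the image of `Φ(n)` in `PSL(2, ℤ)`. -/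
def PhiPM (n : ℕ) : Subgroup (Matrix.SpecialLinearGroup (Fin 2) ℤ) :=
  Subgroup.closure {Amat ^ n, Bmat ^ n, -1} ⊔ ⁅Gamma2, Gamma2⁆

/-- The six coset representatives `α_0, …, α_5` of `Γ(2)` in `SL(2, ℤ)`. -/
def alpha : Fin 6 → Matrix.SpecialLinearGroup (Fin 2) ℤ
  | 0 => ⟨!![1, 0; 0, 1], by norm_num [Matrix.det_fin_two_of]⟩
  | 1 => ⟨!![1, 1; -1, 0], by norm_num [Matrix.det_fin_two_of]⟩
  | 2 => ⟨!![0, -1; 1, -1], by norm_num [Matrix.det_fin_two_of]⟩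
  | 3 => ⟨!![0, 1; -1, 0], by norm_num [Matrix.det_fin_two_of]⟩
  | 4 => ⟨!![1, 1; 0, 1], by norm_num [Matrix.det_fin_two_of]⟩
  | 5 => ⟨!![1, 0; 1, 1], by norm_num [Matrix.det_fin_two_of]⟩

/-! ### Freeness of the group generated by `A` and `B` -/

/-- The homomorphism from the free group on two generators sending them to `A` and `B`. -/
def freeHom : FreeGroup (Fin 2) →* Matrix.SpecialLinearGroup (Fin 2) ℤ :=
  FreeGroup.lift ![Amat, Bmat]

lemma Amat_coe : (Amat : Matrix (Fin 2) (Fin 2) ℤ) = !![1, 2; 0, 1] := rfl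

lemma Bmat_coe : (Bmat : Matrix (Fin 2) (Fin 2) ℤ) = !![1, 0; 2, 1] := rfl

lemma Amat_mul_apply (g : Matrix.SpecialLinearGroup (Fin 2) ℤ) :
    (Amat * g) 0 0 = g 0 0 + 2 * g 1 0 ∧ (Amat * g) 1 0 = g 1 0 := by
  simp [Matrix.SpecialLinearGroup.coe_mul, Amat_coe, Matrix.mul_apply, Fin.sum_univ_two]

lemma Bmat_mul_apply (g : Matrix.SpecialLinearGroup (Fin 2) ℤ) :
    (Bmat * g) 0 0 = g 0 0 ∧ (Bmat * g) 1 0 = g 1 0 + 2 * g 0 0 := by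
  simp [Matrix.SpecialLinearGroup.coe_mul, Bmat_coe, Matrix.mul_apply, Fin.sum_univ_two,
    add_comm]

lemma Amat_inv_mul_apply (g : Matrix.SpecialLinearGroup (Fin 2) ℤ) :
    (Amat⁻¹ * g) 0 0 = g 0 0 - 2 * g 1 0 ∧ (Amat⁻¹ * g) 1 0 = g 1 0 := by
  have h := Amat_mul_apply (Amat⁻¹ * g)
  rw [mul_inv_cancel_left] at h
  constructor <;> linarith [h.1, h.2]

lemma Bmat_inv_mul_apply (g : Matrix.SpecialLinearGroup (Fin 2) ℤ) :
    (Bmat⁻¹ * g) 0 0 = g 0 0 ∧ (Bmat⁻¹ * g) 1 0 = g 1 0 - 2 * g 0 0 := by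
  have h := Bmat_mul_apply (Bmat⁻¹ * g)
  rw [mul_inv_cancel_left] at h
  constructor <;> linarith [h.1, h.2]

lemma first_col_ne_zero (g : Matrix.SpecialLinearGroup (Fin 2) ℤ) :
    ¬ (g 0 0 = 0 ∧ g 1 0 = 0) := by
  rintro ⟨h0, h1⟩
  have h := g.det_coe
  rw [Matrix.det_fin_two, h0, h1] at h
  simp at h

/-- The attracting sets of `A` and `B`.  In terms of `z = x / y`, where `(x, y)` is the first column,
they are `1 ≤ z ≤ ∞` and `0 ≤ z < 1`. -/
def attract : Fin 2 → Set (Matrix.SpecialLinearGroup (Fin 2) ℤ) :=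
  ![{g | 0 ≤ (g 0 0 - g 1 0) * g 1 0},
    {g | 0 ≤ g 0 0 * g 1 0 ∧ (g 0 0 - g 1 0) * g 1 0 < 0}]

/-- The attracting sets of `A⁻¹` and `B⁻¹`.  In terms of `z = x / y`, where `(x, y)` is the first
column, they are `z < -1` and `-1 ≤ z < 0`. -/
def repel : Fin 2 → Set (Matrix.SpecialLinearGroup (Fin 2) ℤ) :=
  ![{g | (g 0 0 + g 1 0) * g 1 0 < 0},
    {g | g 0 0 * g 1 0 < 0 ∧ 0 ≤ (g 0 0 + g 1 0) * g 1 0}]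

/-- `B` maps the complement of its repelling set into its attracting set, in coordinates. -/
lemma ping_B (x y : ℤ) (h0 : ¬ (x = 0 ∧ y = 0)) (h : ¬ (x * y < 0 ∧ 0 ≤ (x + y) * y)) :
    0 ≤ x * (y + 2 * x) ∧ (x - (y + 2 * x)) * (y + 2 * x) < 0 := by
  have hsq : 0 < x ^ 2 + y ^ 2 := by
    rcases eq_or_ne x 0 with hx | hx
    · have : y ≠ 0 := fun hy => h0 ⟨hx, hy⟩
      positivity
    · positivity
  rcases lt_or_ge (x * y) 0 with hxy | hxy
  · have h1 : (x + y) * y < 0 := not_le.1 fun h2 => h ⟨hxy, h2⟩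
    have h2 : 0 < x * (x + y) := by linarith [sq_nonneg (x + y),
      show x * (x + y) = (x + y) ^ 2 - (x + y) * y by ring]
    constructor <;> nlinarith
  · constructor <;> nlinarith

/-- `B⁻¹` maps the complement of the attracting set of `B` into the repelling set. -/
lemma pong_B (x y : ℤ) (h0 : ¬ (x = 0 ∧ y = 0)) (h : ¬ (0 ≤ x * y ∧ (x - y) * y < 0)) :
    x * (y - 2 * x) < 0 ∧ 0 ≤ (x + (y - 2 * x)) * (y - 2 * x) := by
  have hsq : 0 < x ^ 2 + y ^ 2 := by
    rcases eq_or_ne x 0 with hx | hx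
    · have : y ≠ 0 := fun hy => h0 ⟨hx, hy⟩
      positivity
    · positivity
  rcases lt_or_ge (x * y) 0 with hxy | hxy
  · constructor <;> nlinarith
  · have h1 : 0 ≤ (x - y) * y := not_lt.1 fun h2 => h ⟨hxy, h2⟩
    have h2 : 0 ≤ x * (x - y) := by linarith [sq_nonneg (x - y),
      show x * (x - y) = (x - y) ^ 2 + (x - y) * y by ring]
    constructor <;> nlinarith

lemma freeHom_injective : Function.Injective freeHom := by
  have a0 : ∀ g, g ∈ attract 0 ↔ 0 ≤ (g 0 0 - g 1 0) * g 1 0 := fun _ => Iff.rfl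
  have a1 : ∀ g, g ∈ attract 1 ↔ 0 ≤ g 0 0 * g 1 0 ∧ (g 0 0 - g 1 0) * g 1 0 < 0 :=
    fun _ => Iff.rfl
  have r0 : ∀ g, g ∈ repel 0 ↔ (g 0 0 + g 1 0) * g 1 0 < 0 := fun _ => Iff.rfl
  have r1 : ∀ g, g ∈ repel 1 ↔ g 0 0 * g 1 0 < 0 ∧ 0 ≤ (g 0 0 + g 1 0) * g 1 0 :=
    fun _ => Iff.rfl
  refine FreeGroup.injective_lift_of_ping_pong _ attract repel ?_ ?_ ?_ ?_ ?_ ?_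
  · rw [Fin.forall_fin_two]
    exact ⟨⟨1, by rw [a0]; decide⟩, ⟨ModularGroup.S, by rw [a1]; decide⟩⟩
  · intro i j hij
    rw [Function.onFun, Set.disjoint_left]
    revert i j
    simp only [Fin.forall_fin_two, a0, a1]
    grind
  · intro i j hij
    rw [Function.onFun, Set.disjoint_left]
    revert i j
    simp only [Fin.forall_fin_two, r0, r1]
    grind
  · simp only [Fin.forall_fin_two, Set.disjoint_left, a0, a1, r0, r1]
    refine ⟨⟨fun g h => ?_, fun g h => ?_⟩, ⟨fun g h => ?_, fun g h => ?_⟩⟩ <;>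
      intro h' <;> nlinarith [sq_nonneg (g 1 0)]
  · have hA : ∀ g, g ∉ repel 0 → Amat * g ∈ attract 0 := fun g hg => by
      rw [r0] at hg
      rw [a0, (Amat_mul_apply g).1, (Amat_mul_apply g).2]
      linarith
    have hB : ∀ g, g ∉ repel 1 → Bmat * g ∈ attract 1 := fun g hg => by
      have h0 := first_col_ne_zero g
      rw [r1] at hg
      rw [a1, (Bmat_mul_apply g).1, (Bmat_mul_apply g).2]
      exact ping_B _ _ h0 hg
    rw [Fin.forall_fin_two]
    constructor
    · rintro _ ⟨g, hg, rfl⟩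
      exact hA g hg
    · rintro _ ⟨g, hg, rfl⟩
      exact hB g hg
  · have hA : ∀ g, g ∉ attract 0 → Amat⁻¹ * g ∈ repel 0 := fun g hg => by
      rw [a0] at hg
      rw [r0, (Amat_inv_mul_apply g).1, (Amat_inv_mul_apply g).2]
      linarith
    have hB : ∀ g, g ∉ attract 1 → Bmat⁻¹ * g ∈ repel 1 := fun g hg => by
      have h0 := first_col_ne_zero g
      rw [a1] at hg
      rw [r1, (Bmat_inv_mul_apply g).1, (Bmat_inv_mul_apply g).2]
      exact pong_B _ _ h0 hg
    rw [Fin.forall_fin_two]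
    constructor
    · rintro _ ⟨g, hg, rfl⟩
      exact hA g hg
    · rintro _ ⟨g, hg, rfl⟩
      exact hB g hg

lemma freeHom_ne_neg_one (w : FreeGroup (Fin 2)) : freeHom w ≠ -1 := by
  intro h
  have h2 : w ^ 2 = 1 := freeHom_injective (by rw [map_pow, h, map_one]; simp)
  have hw : w = 1 := by simpa using h2
  rw [hw, map_one] at h
  revert h
  decide

/-! ### Elements of `Γ(2)` up to sign -/

/-- The subgroup `{±1} · F(K)` of `SL(2, ℤ)`, where `F` is `freeHom`. -/
def signed (K : Subgroup (FreeGroup (Fin 2))) :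
    Subgroup (Matrix.SpecialLinearGroup (Fin 2) ℤ) where
  carrier := {x | ∃ w ∈ K, x = freeHom w ∨ x = -freeHom w}
  one_mem' := ⟨1, K.one_mem, by simp⟩
  mul_mem' := by
    rintro _ _ ⟨u, hu, rfl | rfl⟩ ⟨v, hv, rfl | rfl⟩ <;>
      exact ⟨u * v, K.mul_mem hu hv, by simp⟩
  inv_mem' := by
    rintro _ ⟨u, hu, rfl | rfl⟩ <;> exact ⟨u⁻¹, K.inv_mem hu, by simp⟩

lemma freeHom_mem_signed {K : Subgroup (FreeGroup (Fin 2))} {w : FreeGroup (Fin 2)}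
    (h : freeHom w ∈ signed K) : w ∈ K := by
  obtain ⟨u, hu, h | h⟩ := h
  · rwa [freeHom_injective h]
  · refine absurd ?_ (freeHom_ne_neg_one (w * u⁻¹))
    simp [h]

/-- Finitely many elements of `⟨A, B, -1⟩`, enough to express how right multiplication by `S` and
`T` permutes the cosets of the `alpha k`. -/
def smallWords : List (Matrix.SpecialLinearGroup (Fin 2) ℤ) :=
  [1, Amat, Bmat, Amat⁻¹, Bmat⁻¹, Amat * Bmat⁻¹, Bmat * Amat⁻¹, Bmat⁻¹ * Amat, Amat⁻¹ * Bmat,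
   -1, -Amat, -Bmat, -Amat⁻¹, -Bmat⁻¹, -(Amat * Bmat⁻¹), -(Bmat * Amat⁻¹), -(Bmat⁻¹ * Amat),
   -(Amat⁻¹ * Bmat)]

lemma smallWords_subset : ∀ h ∈ smallWords, h ∈ Subgroup.closure {Amat, Bmat, -1} := by
  have hA : Amat ∈ Subgroup.closure {Amat, Bmat, -1} := Subgroup.subset_closure (by simp)
  have hB : Bmat ∈ Subgroup.closure {Amat, Bmat, -1} := Subgroup.subset_closure (by simp)
  have hn : ∀ x, x ∈ Subgroup.closure {Amat, Bmat, -1} →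
      -x ∈ Subgroup.closure {Amat, Bmat, -1} := fun x hx => by
    have h1 : -1 ∈ Subgroup.closure {Amat, Bmat, -1} := Subgroup.subset_closure (by simp)
    simpa using mul_mem h1 hx
  simp only [smallWords, List.forall_mem_cons]
  simp only [List.not_mem_nil, false_implies, implies_true, and_true]
  refine ⟨?_, ?_, ?_, ?_, ?_, ?_, ?_, ?_, ?_, ?_, ?_, ?_, ?_, ?_, ?_, ?_, ?_, ?_⟩ <;>
    repeat first
      | assumption
      | exact one_mem _
      | apply hn
      | apply mul_mem
      | apply inv_mem

lemma alpha_mul_generator : ∀ k : Fin 6,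
    ∀ y ∈ [ModularGroup.S, ModularGroup.T, ModularGroup.S⁻¹, ModularGroup.T⁻¹],
    ∃ k' : Fin 6, ∃ h ∈ smallWords, alpha k * y = h * alpha k' := by
  decide +kernel

/-- Every element of `SL(2, ℤ)` lies in one of the six cosets `⟨A, B, -1⟩ α_k`. -/
lemma exists_mul_alpha (g : Matrix.SpecialLinearGroup (Fin 2) ℤ) :
    ∃ h ∈ Subgroup.closure {Amat, Bmat, -1}, ∃ k, g = h * alpha k := by
  have step : ∀ x y : Matrix.SpecialLinearGroup (Fin 2) ℤ,
      y ∈ [ModularGroup.S, ModularGroup.T, ModularGroup.S⁻¹, ModularGroup.T⁻¹] →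
      (∃ h ∈ Subgroup.closure {Amat, Bmat, -1}, ∃ k, x = h * alpha k) →
      ∃ h ∈ Subgroup.closure {Amat, Bmat, -1}, ∃ k, x * y = h * alpha k := by
    rintro _ y hy ⟨h, hh, k, rfl⟩
    obtain ⟨k', h', hh', e⟩ := alpha_mul_generator k y hy
    exact ⟨h * h', mul_mem hh (smallWords_subset _ hh'), k', by rw [mul_assoc, e, mul_assoc]⟩
  have hg : g ∈ Subgroup.closure {ModularGroup.S, ModularGroup.T} := by
    rw [SpecialLinearGroup.SL2Z_generators]; trivial
  induction hg using Subgroup.closure_induction_right with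
  | one => exact ⟨1, one_mem _, 0, by decide⟩
  | mul_right x _ y hy ih => exact step x y (by rcases hy with rfl | rfl <;> simp) ih
  | mul_inv_cancel x _ y hy ih => exact step x y⁻¹ (by rcases hy with rfl | rfl <;> simp) ih

lemma Amat_mem_Gamma2 : Amat ∈ Gamma2 := by
  rw [Gamma2, CongruenceSubgroup.Gamma_mem]; decide

lemma Bmat_mem_Gamma2 : Bmat ∈ Gamma2 := by
  rw [Gamma2, CongruenceSubgroup.Gamma_mem]; decide

lemma neg_one_mem_Gamma2 : (-1 : Matrix.SpecialLinearGroup (Fin 2) ℤ) ∈ Gamma2 := by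
  rw [Gamma2, CongruenceSubgroup.Gamma_mem]; decide

lemma closure_le_gamma2 : Subgroup.closure {Amat, Bmat, -1} ≤ Gamma2 := by
  rw [Subgroup.closure_le]
  rintro _ (rfl | rfl | rfl)
  exacts [Amat_mem_Gamma2, Bmat_mem_Gamma2, neg_one_mem_Gamma2]

/-- The matrices `alpha k` lie in distinct cosets of `Γ(2)`. -/
lemma alpha_inj {k l : Fin 6} (h : alpha k * (alpha l)⁻¹ ∈ Gamma2) : k = l := by
  rw [Gamma2, CongruenceSubgroup.Gamma_mem] at h
  revert k l
  decide +kernel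

lemma gamma2_le_closure : Gamma2 ≤ Subgroup.closure {Amat, Bmat, -1} := by
  intro g hg
  obtain ⟨h, hh, k, rfl⟩ := exists_mul_alpha g
  have e1 : alpha 0 = 1 := by decide
  have hk : k = 0 := alpha_inj (by
    rw [e1, inv_one, mul_one]
    exact (Subgroup.mul_mem_cancel_left _ (closure_le_gamma2 hh)).1 hg)
  rwa [hk, e1, mul_one]

lemma gamma2_le_signed : Gamma2 ≤ signed ⊤ := by
  refine gamma2_le_closure.trans ?_
  rw [Subgroup.closure_le]
  rintro _ (rfl | rfl | rfl)
  · exact ⟨FreeGroup.of 0, trivial, by simp [freeHom]⟩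
  · exact ⟨FreeGroup.of 1, trivial, by simp [freeHom]⟩
  · exact ⟨1, trivial, by simp⟩

/-! ### Exponent sums modulo `n` -/

/-- The pair of exponent sums modulo `n` of a word in the free group on two generators. -/
def expSum (n : ℕ) : FreeGroup (Fin 2) →* Multiplicative (ZMod n × ZMod n) :=
  FreeGroup.lift ![Multiplicative.ofAdd (1, 0), Multiplicative.ofAdd (0, 1)]

lemma phiPM_le_signed (n : ℕ) : PhiPM n ≤ signed (expSum n).ker := by
  refine sup_le ?_ ?_
  · rw [Subgroup.closure_le]
    rintro _ (rfl | rfl | rfl)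
    · refine ⟨FreeGroup.of 0 ^ n, ?_, by simp [freeHom]⟩
      simp [MonoidHom.mem_ker, expSum, ← ofAdd_nsmul]
    · refine ⟨FreeGroup.of 1 ^ n, ?_, by simp [freeHom]⟩
      simp [MonoidHom.mem_ker, expSum, ← ofAdd_nsmul]
    · exact ⟨1, one_mem _, by simp⟩
  · rw [Subgroup.commutator_le]
    intro x hx y hy
    obtain ⟨u, -, hu⟩ := gamma2_le_signed hx
    obtain ⟨v, -, hv⟩ := gamma2_le_signed hy
    refine ⟨u * v * u⁻¹ * v⁻¹, ?_, Or.inl ?_⟩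
    · simp [MonoidHom.mem_ker]
    · rcases hu with rfl | rfl <;> rcases hv with rfl | rfl <;>
        simp [commutatorElement_def]

/-! ### Cosets of `Φ±(n)` in `Γ(2)` -/

lemma phiPM_le_gamma2 (n : ℕ) : PhiPM n ≤ Gamma2 := by
  refine sup_le ?_ ?_
  · rw [Subgroup.closure_le]
    rintro _ (rfl | rfl | rfl)
    exacts [pow_mem Amat_mem_Gamma2 n, pow_mem Bmat_mem_Gamma2 n, neg_one_mem_Gamma2]
  · rw [Subgroup.commutator_le]
    intro x hx y hy
    rw [commutatorElement_def]
    exact mul_mem (mul_mem (mul_mem hx hy) (inv_mem hx)) (inv_mem hy)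

lemma commutator_mem_phiPM (n : ℕ) {x y : Matrix.SpecialLinearGroup (Fin 2) ℤ}
    (hx : x ∈ Gamma2) (hy : y ∈ Gamma2) : x * y * x⁻¹ * y⁻¹ ∈ PhiPM n :=
  (le_sup_right : _ ≤ PhiPM n) (Subgroup.commutator_mem_commutator hx hy)

lemma Amat_pow_mem_phiPM (n : ℕ) : Amat ^ n ∈ PhiPM n :=
  (le_sup_left : _ ≤ PhiPM n) (Subgroup.subset_closure (by simp))

lemma Bmat_pow_mem_phiPM (n : ℕ) : Bmat ^ n ∈ PhiPM n :=
  (le_sup_left : _ ≤ PhiPM n) (Subgroup.subset_closure (by simp))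

lemma neg_one_mem_phiPM (n : ℕ) : -1 ∈ PhiPM n :=
  (le_sup_left : _ ≤ PhiPM n) (Subgroup.subset_closure (by simp))

lemma conj_mem_phiPM (n : ℕ) {x y : Matrix.SpecialLinearGroup (Fin 2) ℤ}
    (hx : x ∈ Gamma2) (hy : y ∈ PhiPM n) : x * y * x⁻¹ ∈ PhiPM n := by
  have h := mul_mem (commutator_mem_phiPM n hx (phiPM_le_gamma2 n hy)) hy
  rwa [inv_mul_cancel_right] at h

lemma exists_zpow_rep (n : ℕ) {h : Matrix.SpecialLinearGroup (Fin 2) ℤ} (hh : h ∈ Gamma2) :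
    ∃ i j : ℤ, h * (Amat ^ i * Bmat ^ j)⁻¹ ∈ PhiPM n := by
  have hh' := gamma2_le_closure hh
  clear hh
  -- Multiplying by `A ^ e` on the right changes the quotient by a commutator.
  have stepA : ∀ (x : Matrix.SpecialLinearGroup (Fin 2) ℤ) (e : ℤ),
      (∃ i j : ℤ, x * (Amat ^ i * Bmat ^ j)⁻¹ ∈ PhiPM n) →
      ∃ i j : ℤ, x * Amat ^ e * (Amat ^ i * Bmat ^ j)⁻¹ ∈ PhiPM n := by
    rintro x e ⟨i, j, hx⟩
    refine ⟨i + e, j, ?_⟩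
    have hA := fun i : ℤ => zpow_mem Amat_mem_Gamma2 i
    have hB := zpow_mem Bmat_mem_Gamma2 j
    have := mul_mem hx (commutator_mem_phiPM n
      (mul_mem (mul_mem (hA i) hB) (inv_mem (hA i))) (hA e))
    convert this using 1
    rw [_root_.zpow_add]
    group
  have stepB : ∀ (x : Matrix.SpecialLinearGroup (Fin 2) ℤ) (e : ℤ),
      (∃ i j : ℤ, x * (Amat ^ i * Bmat ^ j)⁻¹ ∈ PhiPM n) →
      ∃ i j : ℤ, x * Bmat ^ e * (Amat ^ i * Bmat ^ j)⁻¹ ∈ PhiPM n := by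
    rintro x e ⟨i, j, hx⟩
    refine ⟨i, j + e, ?_⟩
    convert hx using 1
    group
  have stepN : ∀ x : Matrix.SpecialLinearGroup (Fin 2) ℤ,
      (∃ i j : ℤ, x * (Amat ^ i * Bmat ^ j)⁻¹ ∈ PhiPM n) →
      ∃ i j : ℤ, x * (-1) * (Amat ^ i * Bmat ^ j)⁻¹ ∈ PhiPM n := by
    rintro x ⟨i, j, hx⟩
    refine ⟨i, j, ?_⟩
    convert mul_mem (neg_one_mem_phiPM n) hx using 1
    simp
  induction hh' using Subgroup.closure_induction_right with
  | one => exact ⟨0, 0, by simp⟩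
  | mul_right x _ y hy ih =>
    rcases hy with rfl | rfl | rfl
    · simpa using stepA x 1 ih
    · simpa using stepB x 1 ih
    · exact stepN x ih
  | mul_inv_cancel x _ y hy ih =>
    rcases hy with rfl | rfl | rfl
    · simpa using stepA x (-1) ih
    · simpa using stepB x (-1) ih
    · have e : (-1 : Matrix.SpecialLinearGroup (Fin 2) ℤ)⁻¹ = -1 := by decide
      rw [e]
      exact stepN x ih

lemma exists_fin_rep (n : ℕ) (hn : 1 ≤ n) {h : Matrix.SpecialLinearGroup (Fin 2) ℤ}
    (hh : h ∈ Gamma2) :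
    ∃ i j : Fin n, h * (Amat ^ (i : ℕ) * Bmat ^ (j : ℕ))⁻¹ ∈ PhiPM n := by
  have hrem : ∀ i : ℤ, ∃ (r : Fin n) (q : ℤ), i = r + n * q := by
    intro i
    have h0 : (0 : ℤ) < n := by omega
    have h1 := Int.emod_nonneg i h0.ne'
    have h2 := Int.emod_lt_of_pos i h0
    refine ⟨⟨(i % n).toNat, by omega⟩, i / n, ?_⟩
    have := Int.emod_add_mul_ediv i n
    simp only [Int.toNat_of_nonneg h1]
    omega
  obtain ⟨i, j, hij⟩ := exists_zpow_rep n hh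
  obtain ⟨r, q, rfl⟩ := hrem i
  obtain ⟨s, p, rfl⟩ := hrem j
  refine ⟨r, s, ?_⟩
  have hA := zpow_mem (Amat_pow_mem_phiPM n) q
  have hB := conj_mem_phiPM n (pow_mem Amat_mem_Gamma2 r) (zpow_mem (Bmat_pow_mem_phiPM n) p)
  convert mul_mem hij (mul_mem hA hB) using 1
  simp only [_root_.zpow_add, _root_.zpow_mul, zpow_natCast]
  group

/-- For every `n ≥ 1` and every `g ∈ SL(2, ℤ)`, there is exactly one triple `(i, j, k)` with
`0 ≤ i, j ≤ n-1` and `0 ≤ k ≤ 5` such that `g * (A^i B^j α_k)⁻¹ ∈ Φ±(n)`: the matrices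
`A^i B^j α_k` form a complete set of right coset representatives of `Φ(n)` in `PSL(2, ℤ)`. -/
theorem exists_unique_coset_rep_Phi_in_SL2Z (n : ℕ) (hn : 1 ≤ n)
    (g : Matrix.SpecialLinearGroup (Fin 2) ℤ) :
    ∃! t : Fin n × Fin n × Fin 6,
      g * (Amat ^ (t.1 : ℕ) * Bmat ^ (t.2.1 : ℕ) * alpha t.2.2)⁻¹ ∈ PhiPM n := by
  refine existsUnique_of_exists_of_unique ?_ ?_
  · obtain ⟨h, hh, k, rfl⟩ := exists_mul_alpha g
    obtain ⟨i, j, hij⟩ := exists_fin_rep n hn (closure_le_gamma2 hh)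
    refine ⟨(i, j, k), ?_⟩
    convert hij using 1
    group
  · rintro ⟨i, j, k⟩ ⟨i', j', k'⟩ h h'
    have hq := mul_mem (inv_mem h) h'
    have hAB : ∀ i j : ℕ, Amat ^ i * Bmat ^ j ∈ Gamma2 := fun i j =>
      mul_mem (pow_mem Amat_mem_Gamma2 i) (pow_mem Bmat_mem_Gamma2 j)
    replace hq : (Amat ^ (i : ℕ) * Bmat ^ (j : ℕ)) * (alpha k * (alpha k')⁻¹) *
        (Amat ^ (i' : ℕ) * Bmat ^ (j' : ℕ))⁻¹ ∈ PhiPM n := by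
      convert hq using 1
      group
    obtain rfl : k = k' := alpha_inj (by
      have h1 := phiPM_le_gamma2 n hq
      rw [Subgroup.mul_mem_cancel_right _ (inv_mem (hAB _ _)),
        Subgroup.mul_mem_cancel_left _ (hAB _ _)] at h1
      exact h1)
    rw [mul_inv_cancel, mul_one] at hq
    have hw : (FreeGroup.of 0 ^ (i : ℕ) * FreeGroup.of 1 ^ (j : ℕ)) *
        (FreeGroup.of 0 ^ (i' : ℕ) * FreeGroup.of 1 ^ (j' : ℕ))⁻¹ ∈ (expSum n).ker := by
      refine freeHom_mem_signed (phiPM_le_signed n ?_)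
      simpa [freeHom] using hq
    rw [MonoidHom.mem_ker, map_mul, map_inv, mul_inv_eq_one] at hw
    have hz : ((i : ℕ) : ZMod n) = (i' : ℕ) ∧ ((j : ℕ) : ZMod n) = (j' : ℕ) := by
      simpa [expSum, ← ofAdd_nsmul, ← ofAdd_add] using hw
    have hfin : ∀ a b : Fin n, ((a : ℕ) : ZMod n) = (b : ℕ) → a = b := by
      intro a b hab
      rw [ZMod.natCast_eq_natCast_iff] at hab
      exact Fin.ext (Nat.ModEq.eq_of_lt_of_lt hab a.2 b.2)
    rw [hfin i i' hz.1, hfin j j' hz.2]
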